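/- Let σ be the shift map on Σ = {1,…,m}^ℕ (m ≥ 2) with metric d(x,y) = 2^{−min{j ≥ 1 : x_j ≠ y_j}}, and let M_1,…,M_m be d×d complex matrices such that M_{i_1}⋯M_{i_n} ≠ 0 for every finite word (i_1,…,i_n), and such that there exist C > 0 and k ∈ ℕ with the property that for all finite words w, w' there is a word w̄ of length at most k with ‖M_w M_{w̄} M_{w'}‖ ≥ C·‖M_w‖·‖M_{w'}‖, where M_{(i_1,…,i_n)} = M_{i_1}⋯M_{i_n}. For t ≥ 0 let Φ^t = (φ^t_n)_n with φ^t_n(x) = t·log‖M_{x_1}⋯M_{x_n}‖ (each Φ^t is almost additive, hence asymptotically additive for σ). If the irregular set I(Φ^1,σ) is nonempty, then for every t ≥ 0, P_σ(⋂_{s>0} I(Φ^s,σ), Φ^t) = P_σ(Φ^t). -/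

import Mathlib

open MeasureTheory Filter Set
open scoped ENNReal

section Defs

variable {X : Type*} [MetricSpace X]

/-- The Bowen dynamical ball `B_n(x, ε)`. -/
def dynBall (f : X → X) (n : ℕ) (x : X) (ε : ℝ) : Set X :=
  {y | ∀ j < n, dist (f^[j] x) (f^[j] y) < ε}

/-- A sequence `Φ = (φ_n)` of continuous functions is asymptotically additive for `f`. -/
def AsympAdditive (f : X → X) (Φ : ℕ → X → ℝ) : Prop :=
  (∀ n, Continuous (Φ n)) ∧
    ∀ δ : ℝ, 0 < δ → ∃ ψ : X → ℝ, Continuous ψ ∧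
      Filter.limsup (fun n => (⨆ x : X, |Φ n x - birkhoffSum f ψ n x|) / n) Filter.atTop < δ

/-- Sum `Σ_{B_n(x,ε) ∈ Γ} exp(-αn + sup_{B_n(x,ε)} φ_n)` over a family of Bowen balls,
indexed by (center, order) pairs. -/
noncomputable def coverSum (f : X → X) (Φ : ℕ → X → ℝ) (α ε : ℝ) (Γ : Set (X × ℕ)) : ℝ≥0∞ :=
  ∑' p : Γ, ENNReal.ofReal
    (Real.exp (-α * ((p : X × ℕ).2 : ℝ) +
      sSup (Φ (p : X × ℕ).2 '' dynBall f (p : X × ℕ).2 (p : X × ℕ).1 ε)))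

/-- `M(Z, α, ε, N, Φ)`. -/
noncomputable def Mcal (f : X → X) (Φ : ℕ → X → ℝ) (Z : Set X) (α ε : ℝ) (N : ℕ) : ℝ≥0∞ :=
  ⨅ (Γ : Set (X × ℕ)) (_ : Γ.Countable) (_ : ∀ p ∈ Γ, N ≤ p.2)
    (_ : Z ⊆ ⋃ p ∈ Γ, dynBall f p.2 p.1 ε), coverSum f Φ α ε Γ

/-- `m(Z, α, ε, Φ) = lim_{N → ∞} M(Z, α, ε, N, Φ)`, a monotone limit. -/
noncomputable def mcal (f : X → X) (Φ : ℕ → X → ℝ) (Z : Set X) (α ε : ℝ) : ℝ≥0∞ :=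
  ⨆ N : ℕ, Mcal f Φ Z α ε N

/-- `P_f(Z, Φ, ε) = inf {α : m(Z, α, ε, Φ) = 0}`. -/
noncomputable def aaPressureAt (f : X → X) (Φ : ℕ → X → ℝ) (Z : Set X) (ε : ℝ) : EReal :=
  sInf ((fun a : ℝ => (a : EReal)) '' {a : ℝ | mcal f Φ Z a ε = 0})

/-- The asymptotically additive topological pressure `P_f(Z, Φ) = lim_{ε → 0} P_f(Z, Φ, ε)`. -/
noncomputable def aaPressure (f : X → X) (Φ : ℕ → X → ℝ) (Z : Set X) : EReal :=
  Filter.limsup (fun ε => aaPressureAt f Φ Z ε) (nhdsWithin (0 : ℝ) (Set.Ioi 0))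

/-- The `Φ`-irregular set `I(Φ, f)`. -/
def irregularSet (Φ : ℕ → X → ℝ) : Set X :=
  {x | ¬ ∃ c : ℝ, Filter.Tendsto (fun n => Φ n x / n) Filter.atTop (nhds c)}

/-- The `Φ`-regular set `R(Φ, f)`. -/
def regularSet (Φ : ℕ → X → ℝ) : Set X :=
  {x | ∃ c : ℝ, Filter.Tendsto (fun n => Φ n x / n) Filter.atTop (nhds c)}

/-- A blowup function. -/
def IsBlowupFun (g : ℕ → ℕ) : Prop :=
  Monotone g ∧ (∀ M : ℕ, ∃ n, M < g n) ∧ (∀ n, 0 < n → g n < n) ∧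
    Filter.Tendsto (fun n => (g n : ℝ) / n) Filter.atTop (nhds 0)

/-- The `g`-blowup `B_n(g; x, ε)` of the Bowen ball `B_n(x, ε)`. -/
def blowBall (f : X → X) (g : ℕ → ℕ) (n : ℕ) (x : X) (ε : ℝ) : Set X :=
  {y | ∃ Λ : Finset ℕ, Λ ⊆ Finset.range n ∧ (Finset.range n \ Λ).card ≤ g n ∧
    ∀ j ∈ Λ, dist (f^[j] x) (f^[j] y) ≤ ε}

/-- The `g`-almost product property. -/
def AlmostProductProperty (f : X → X) (g : ℕ → ℕ) : Prop :=
  ∃ m : ℝ → ℕ, (∀ ⦃a b : ℝ⦄, 0 < a → a ≤ b → m b ≤ m a) ∧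
    ∀ k : ℕ, 0 < k → ∀ (x : ℕ → X) (ε : ℕ → ℝ) (n : ℕ → ℕ),
      (∀ j < k, 0 < ε j) → (∀ j < k, m (ε j) ≤ n j) →
      (⋂ j ∈ Finset.range k,
        (f^[∑ i ∈ Finset.range j, n i]) ⁻¹' blowBall f g (n j) (x j) (ε j)).Nonempty

/-- `x` and `y` are `(δ, n, ε)`-separated. -/
def sepPair (f : X → X) (δ : ℝ) (n : ℕ) (ε : ℝ) (x y : X) : Prop :=
  δ * (n : ℝ) ≤ (((Finset.range n).filter fun j => ε < dist (f^[j] x) (f^[j] y)).card : ℝ)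

end Defs

section MeasureDefs

variable {X : Type*} [MetricSpace X] [MeasurableSpace X] [BorelSpace X]

/-- The set `M_f(X)` of `f`-invariant Borel probability measures. -/
def invProb (f : X → X) : Set (ProbabilityMeasure X) :=
  {μ | (μ : Measure X).map f = (μ : Measure X)}

/-- `Φ*(μ) = lim_n (1/n) ∫ φ_n dμ` (the limit exists for invariant `μ` and
asymptotically additive `Φ`; we encode it as a `limsup`). -/
noncomputable def phiStar (Φ : ℕ → X → ℝ) (μ : ProbabilityMeasure X) : ℝ :=
  Filter.limsup (fun n => (∫ x, Φ n x ∂(μ : Measure X)) / n) Filter.atTop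

/-- The empirical measure `E_n(x) = (1/n) Σ_{j<n} δ_{f^j x}` (junk value `δ_x` for `n = 0`). -/
noncomputable def empMeas (f : X → X) (x : X) (n : ℕ) : ProbabilityMeasure X :=
  if h : n = 0 then ⟨Measure.dirac x, inferInstance⟩
  else
    ⟨(n : ℝ≥0∞)⁻¹ • ∑ j ∈ Finset.range n, Measure.dirac (f^[j] x), by
      constructor
      simp only [Measure.smul_apply, smul_eq_mul, Measure.coe_finset_sum, Finset.sum_apply,
        measure_univ, Finset.sum_const, Finset.card_range, nsmul_eq_mul, mul_one]
      exact ENNReal.inv_mul_cancel (by exact_mod_cast h) (by simp)⟩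

/-- `M_x f`: the set of weak* limit points of the sequence of empirical measures of `x`. -/
def limitMeasures (f : X → X) (x : X) : Set (ProbabilityMeasure X) :=
  {μ | MapClusterPt μ Filter.atTop fun n => empMeas f x n}

/-- `G_K = {x : M_x f = K}`. -/
def genericPts (f : X → X) (K : Set (ProbabilityMeasure X)) : Set X :=
  {x | limitMeasures f x = K}

/-- `^K G = {x : M_x f ∩ K ≠ ∅}`. -/
def clusterIn (f : X → X) (K : Set (ProbabilityMeasure X)) : Set X :=
  {x | (limitMeasures f x ∩ K).Nonempty}

/-- A finite measurable partition of `X`. -/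
def IsFinPartition (P : Finset (Set X)) : Prop :=
  (∀ A ∈ P, MeasurableSet A) ∧ ⋃₀ (↑P : Set (Set X)) = Set.univ ∧
    (↑P : Set (Set X)).PairwiseDisjoint id

/-- The entropy `H_μ(⋁_{i<n} f^{-i} P)` of the `n`-th dynamical refinement of `P`. -/
noncomputable def joinEnt (f : X → X) (μ : Measure X) (P : Finset (Set X)) (n : ℕ) : ℝ :=
  ∑ g : Fin n → P, Real.negMulLog ((μ (⋂ i : Fin n, f^[(i : ℕ)] ⁻¹' (g i : Set X))).toReal)

/-- The Kolmogorov–Sinai entropy `h_μ(f)`. -/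
noncomputable def entropyKS (f : X → X) (μ : Measure X) : ℝ :=
  sSup {h : ℝ | ∃ P : Finset (Set X), IsFinPartition P ∧
    h = Filter.liminf (fun n => joinEnt f μ P n / n) Filter.atTop}

/-- The uniform separation property. -/
def UniformSeparation (f : X → X) : Prop :=
  ∀ η : ℝ, 0 < η → ∃ δs εs : ℝ, 0 < δs ∧ 0 < εs ∧
    ∀ μ : ProbabilityMeasure X, μ ∈ invProb f → Ergodic f (μ : Measure X) →
      ∀ F : Set (ProbabilityMeasure X), F ∈ nhds μ →
        ∃ n₀ : ℕ, ∀ n, n₀ ≤ n →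
          ∃ E : Finset X, (↑E : Set X) ⊆ {y | empMeas f y n ∈ F} ∧
            (↑E : Set X).Pairwise (sepPair f δs n εs) ∧
            (2 : ℝ) ^ ((n : ℝ) * (entropyKS f (μ : Measure X) - η)) ≤ (E.card : ℝ)

/-- `f` is sequentially saturated. -/
def SeqSaturated (f : X → X) : Prop :=
  ∀ Φ : ℕ → X → ℝ, AsympAdditive f Φ →
    ∀ K : Set (ProbabilityMeasure X), K ⊆ invProb f → IsCompact K → IsConnected K →
      aaPressure f Φ (genericPts f K) =
        sInf ((fun μ : ProbabilityMeasure X =>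
          ((entropyKS f (μ : Measure X) + phiStar Φ μ : ℝ) : EReal)) '' K)

end MeasureDefs
theorem irregular_words {α : Type*} (ℓ : List α → ℝ) (h0 : ℓ [] = 0) (x : ℕ → α)
    (hx : ¬ ∃ c : ℝ, Tendsto (fun n : ℕ => ℓ (List.ofFn fun i : Fin n => x i) / n) atTop (nhds c)) :
    ∃ u : ℕ → List α,
      (∀ J : ℕ, ∑ s ∈ Finset.range (J + 1), (((u s).length : ℝ) + |ℓ (u s)|) ≤ J) ∧
      ¬ ∃ c : ℝ, ∀ η > 0, ∀ᶠ s : ℕ in atTop, |ℓ (u s) - c * (u s).length| ≤ η * s := by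
  set p : ℕ → List α := fun n => List.ofFn fun i : Fin n => x i with hp
  set e : ℕ → ℝ := fun n => ℓ (p n) / n with he
  set D : ℕ → ℝ := fun n => n + |ℓ (p n)| with hD
  have hDn : ∀ n : ℕ, (n : ℝ) ≤ D n := fun n => by simp [hD]
  have hlen : ∀ n, (p n).length = n := fun n => by simp [hp]
  have hc : ¬ CauchySeq e := fun h => hx (cauchySeq_tendsto_of_complete h)
  rw [Metric.cauchySeq_iff'] at hc
  push Not at hc
  obtain ⟨ε, hε, hc⟩ := hc
  have hnext : ∀ N : ℕ, ∃ n : ℕ, 2 * D N + 1 ≤ n ∧ ε / 2 ≤ |e n - e N| := by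
    intro N
    obtain ⟨M, hM⟩ := exists_nat_ge (2 * D N + 1)
    obtain ⟨n, hn, hn2⟩ := hc M
    rw [Real.dist_eq] at hn2
    by_cases h : ε / 2 ≤ |e M - e N|
    · exact ⟨M, hM, h⟩
    · refine ⟨n, hM.trans (by exact_mod_cast hn), ?_⟩
      have := abs_sub_le (e n) (e N) (e M)
      rw [abs_sub_comm (e N) (e M)] at this
      linarith
  choose nx hnx1 hnx2 using hnext
  obtain ⟨n, hn0, hns⟩ : ∃ n : ℕ → ℕ, n 0 = 1 ∧ ∀ i, n (i + 1) = nx (n i) :=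
    ⟨fun i => Nat.rec 1 (fun _ N => nx N) i, rfl, fun i => rfl⟩
  have hn1 : ∀ i, 1 ≤ n i := by
    intro i
    induction i with
    | zero => rw [hn0]
    | succ i ih =>
      have h1 := hnx1 (n i)
      have h2 := hDn (n i)
      rw [hns]
      have h3 : (1 : ℝ) ≤ (nx (n i) : ℝ) := by
        have : (0 : ℝ) ≤ (n i : ℝ) := Nat.cast_nonneg _
        linarith
      exact_mod_cast h3
  have hD1 : ∀ i, 1 ≤ D (n i) := fun i => le_trans (by exact_mod_cast hn1 i) (hDn _)
  have hDD : ∀ i, 2 * D (n i) + 1 ≤ D (n (i + 1)) := fun i => by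
    rw [hns]; exact (hnx1 (n i)).trans (hDn _)
  obtain ⟨S, hS1, hS2⟩ : ∃ S : ℕ → ℕ, (∀ i, 2 * D (n i) ≤ S i) ∧
      (∀ i, (S i : ℝ) < 2 * D (n i) + 1) :=
    ⟨fun i => ⌈2 * D (n i)⌉₊, fun i => Nat.le_ceil _, fun i =>
      Nat.ceil_lt_add_one (by have := hD1 i; linarith)⟩
  have hSm : StrictMono S := by
    refine strictMono_nat_of_lt_succ fun i => ?_
    have h1 := hS1 (i + 1)
    have h2 := hS2 i
    have h3 := hDD i
    have h4 := hD1 i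
    have : (S i : ℝ) < S (i + 1) := by linarith
    exact_mod_cast this
  classical
  let u : ℕ → List α := fun s => if h : ∃ i, S i = s then p (n h.choose) else []
  have hu1 : ∀ i, u (S i) = p (n i) := by
    intro i
    have h : ∃ j, S j = S i := ⟨i, rfl⟩
    have h2 := hSm.injective h.choose_spec
    simp only [u, dif_pos h, h2]
  have hu2 : ∀ s, (¬ ∃ i, S i = s) → u s = [] := fun s h => by simp only [u, dif_neg h]
  let f : ℕ → ℝ := fun s => ((u s).length : ℝ) + |ℓ (u s)|
  have hf0 : ∀ s, 0 ≤ f s := fun s => by positivity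
  have hf1 : ∀ i, f (S i) = D (n i) := fun i => by simp only [f, hu1, hlen, hD]
  have hf2 : ∀ s, (¬ ∃ i, S i = s) → f s = 0 := fun s h => by simp [f, hu2 s h, h0]
  have hstep : ∀ i, ∑ s ∈ Finset.range (S (i + 1)), f s
      = ∑ s ∈ Finset.range (S i), f s + D (n i) := by
    intro i
    rw [← hf1 i, ← Finset.sum_range_succ]
    symm
    apply Finset.sum_subset
    · intro s hs
      have : S i < S (i + 1) := hSm (by omega)
      simp only [Finset.mem_range] at hs ⊢
      omega
    · intro s hs hs2
      simp only [Finset.mem_range, not_lt] at hs hs2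
      apply hf2
      rintro ⟨j, rfl⟩
      have h1 := hSm.lt_iff_lt.1 hs
      have h2 : i < j := hSm.lt_iff_lt.1 (by omega)
      omega
  have hbase : ∀ J, J ≤ S 0 → ∑ s ∈ Finset.range J, f s = 0 := by
    intro J hJ
    apply Finset.sum_eq_zero
    intro s hs
    apply hf2
    rintro ⟨j, rfl⟩
    have := hSm.monotone (Nat.zero_le j)
    simp only [Finset.mem_range] at hs
    omega
  have hsum : ∀ i, ∑ s ∈ Finset.range (S i), f s ≤ D (n i) := by
    intro i
    induction i with
    | zero => rw [hbase _ le_rfl]; linarith [hD1 0]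
    | succ i ih => rw [hstep]; linarith [hDD i]
  have hSt : Tendsto S atTop atTop := hSm.tendsto_atTop
  refine ⟨u, fun J => ?_, ?_⟩
  · change ∑ s ∈ Finset.range (J + 1), f s ≤ J
    by_cases hJ : J < S 0
    · rw [hbase _ hJ]; positivity
    · have hex : ∃ i, J < S i := by
        obtain ⟨i, hi⟩ := (hSt.eventually_gt_atTop J).exists
        exact ⟨i, hi⟩
      obtain ⟨i, hi⟩ : ∃ i, Nat.find hex = i + 1 := by
        refine Nat.exists_eq_succ_of_ne_zero fun h => ?_
        have := Nat.find_spec hex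
        rw [h] at this
        exact hJ this
      have h1 : J < S (i + 1) := hi ▸ Nat.find_spec hex
      have h2 : S i ≤ J := not_lt.1 (Nat.find_min hex (by omega))
      have h3 : ∑ s ∈ Finset.range (J + 1), f s ≤ ∑ s ∈ Finset.range (S (i + 1)), f s :=
        Finset.sum_le_sum_of_subset_of_nonneg
          (Finset.range_subset_range.2 h1) (fun s _ _ => hf0 s)
      rw [hstep] at h3
      have h4 : (S i : ℝ) ≤ J := by exact_mod_cast h2
      linarith [hsum i, hS1 i]
  · rintro ⟨c, hcc⟩
    set θ : ℝ := min (1 / 2) (ε / (16 * (1 + |c|))) with hθ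
    have hcp : 0 < 1 + |c| := by positivity
    have hθ0 : 0 < θ := by positivity
    have hθ1 : θ ≤ 1 / 2 := min_le_left _ _
    have hθ2 : θ * (1 + |c|) ≤ ε / 16 := by
      have : θ ≤ ε / (16 * (1 + |c|)) := min_le_right _ _
      rw [le_div_iff₀ (by positivity)] at this
      linarith
    have hev := hSt.eventually (hcc (θ / 3) (by positivity))
    have key : ∀ᶠ i in atTop, |e (n i) - c| ≤ ε / 8 := by
      filter_upwards [hev] with i hi
      rw [hu1, hlen] at hi
      have hnp : (0 : ℝ) < n i := by exact_mod_cast hn1 i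
      have h1 : |ℓ (p (n i)) - c * n i| = |e (n i) - c| * n i := by
        rw [← abs_of_pos hnp, ← abs_mul, abs_of_pos hnp]
        congr 1
        simp only [he]
        field_simp
      have h2 : D (n i) = (1 + |e (n i)|) * n i := by
        simp only [hD, he, abs_div, abs_of_pos hnp]
        field_simp
      have h3 : |e (n i) - c| * n i ≤ θ * (1 + |e (n i)|) * n i := by
        rw [← h1]
        refine hi.trans ?_
        have := hS2 i
        have := hD1 i
        rw [mul_assoc, ← h2]
        nlinarith
      have h4 := le_of_mul_le_mul_right h3 hnp
      have h5 : |e (n i)| ≤ |e (n i) - c| + |c| := by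
        have := abs_add_le (e (n i) - c) c
        simpa using this
      nlinarith [abs_nonneg (e (n i) - c)]
    obtain ⟨i, hi⟩ := eventually_atTop.1 key
    have h1 := hi i le_rfl
    have h2 := hi (i + 1) (by omega)
    have h3 := hnx2 (n i)
    rw [← hns] at h3
    have h4 := abs_sub_le (e (n (i + 1))) c (e (n i))
    rw [abs_sub_comm c] at h4
    linarith

/-- The `s`-th block of length `L` of a sequence `z`. -/
def gBlk {α : Type*} (L : ℕ) (z : ℕ → α) (s : ℕ) : List α :=
  List.ofFn fun i : Fin L => z (s * L + i)

/-- Glue two words with a connecting word. -/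
def glue {α : Type*} (b : List α → List α → List α) (w w' : List α) : List α :=
  w ++ b w w' ++ w'

/-- The words obtained by gluing blocks of `z` and the words `u s`. -/
def gW {α : Type*} (b : List α → List α → List α) (u : ℕ → List α) (L : ℕ) (z : ℕ → α) :
    ℕ → List α
  | 0 => []
  | s + 1 => glue b (glue b (gW b u L z s) (gBlk L z s)) (u s)

/-- The intermediate words. -/
def gG {α : Type*} (b : List α → List α → List α) (u : ℕ → List α) (L : ℕ) (z : ℕ → α)
    (s : ℕ) : List α := glue b (gW b u L z s) (gBlk L z s)

/-- The limit point. -/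
def gF {α : Type*} (b : List α → List α → List α) (u : ℕ → List α) (L : ℕ) (z : ℕ → α) :
    ℕ → α := fun n => (gW b u L z (n + 1)).getD n (z n)

section Words

variable {α : Type*} (b : List α → List α → List α) (u : ℕ → List α) (L : ℕ) (z : ℕ → α)

theorem gBlk_length (s : ℕ) : (gBlk L z s).length = L := by simp [gBlk]

theorem gW_succ (s : ℕ) : gW b u L z (s + 1) = glue b (gG b u L z s) (u s) := rfl

theorem gG_prefix (s : ℕ) : gG b u L z s <+: gW b u L z (s + 1) := by
  rw [gW_succ, glue, List.append_assoc]
  exact List.prefix_append _ _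

theorem gW_prefix_gG (s : ℕ) : gW b u L z s <+: gG b u L z s := by
  rw [gG, glue, List.append_assoc]
  exact List.prefix_append _ _

theorem gW_prefix {i j : ℕ} (h : i ≤ j) : gW b u L z i <+: gW b u L z j := by
  induction j, h using Nat.le_induction with
  | base => exact List.prefix_rfl
  | succ j _ ih => exact ih.trans ((gW_prefix_gG b u L z j).trans (gG_prefix b u L z j))

theorem gW_length_succ (s : ℕ) : (gW b u L z (s + 1)).length =
    (gW b u L z s).length + (b (gW b u L z s) (gBlk L z s)).length + L
      + (b (gG b u L z s) (u s)).length + (u s).length := by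
  rw [gW_succ]
  conv_lhs => rw [glue]
  simp only [List.length_append]
  conv_lhs => rw [gG, glue]
  simp only [List.length_append, gBlk_length]
  rfl

theorem gG_length (s : ℕ) : (gG b u L z s).length =
    (gW b u L z s).length + (b (gW b u L z s) (gBlk L z s)).length + L := by
  rw [gG, glue]
  simp only [List.length_append, gBlk_length]

theorem le_gW_length (s : ℕ) : s * L ≤ (gW b u L z s).length := by
  induction s with
  | zero => simp
  | succ s ih => rw [gW_length_succ, Nat.succ_mul]; omega

theorem gF_eq (hL : 1 ≤ L) {J i : ℕ} (h : i < (gW b u L z J).length) :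
    (gW b u L z J)[i]? = some (gF b u L z i) := by
  have h1 : i < (gW b u L z (i + 1)).length := by
    have := le_gW_length b u L z (i + 1)
    nlinarith
  have h2 : (gW b u L z (i + 1))[i]? = some (gF b u L z i) := by
    rw [gF, List.getD_eq_getElem?_getD, List.getElem?_eq_getElem h1]
    rfl
  rcases le_total (i + 1) J with hJ | hJ
  · rw [← h2]
    exact (List.prefix_iff_getElem?.1 (gW_prefix b u L z hJ) i h1).trans
      (List.getElem?_eq_getElem h1).symm
  · rw [← h2]
    exact ((List.prefix_iff_getElem?.1 (gW_prefix b u L z hJ) i h).trans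
      (List.getElem?_eq_getElem h).symm).symm

theorem ofFn_gF_prefix (hL : 1 ≤ L) {J n : ℕ} (h : n ≤ (gW b u L z J).length) :
    (List.ofFn fun i : Fin n => gF b u L z i) <+: gW b u L z J := by
  rw [List.prefix_iff_getElem?]
  intro i hi
  simp only [List.length_ofFn] at hi
  rw [gF_eq b u L z hL (hi.trans_le h)]
  simp

theorem prefix_ofFn_gF (hL : 1 ≤ L) {J n : ℕ} {w : List α} (hw : w <+: gW b u L z J)
    (h : w.length ≤ n) :
    w <+: List.ofFn fun i : Fin n => gF b u L z i := by
  rw [List.prefix_iff_getElem?]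
  intro i hi
  have h1 := List.prefix_iff_getElem?.1 hw i hi
  rw [gF_eq b u L z hL (hi.trans_le hw.length_le)] at h1
  rw [List.getElem?_eq_getElem (by simpa using hi.trans_le h)]
  simpa using h1

theorem ofFn_gF_length (hL : 1 ≤ L) {J : ℕ} {w : List α} (hw : w <+: gW b u L z J) :
    (List.ofFn fun i : Fin w.length => gF b u L z i) = w := by
  have := prefix_ofFn_gF b u L z hL hw le_rfl
  exact (this.eq_of_length (by simp)).symm

/-- The code of gap lengths. -/
def gCode (k : ℕ) (hk : ∀ w w', (b w w').length ≤ k) (J : ℕ) (s : Fin J) :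
    Fin (k + 1) × Fin (k + 1) :=
  (⟨(b (gW b u L z s) (gBlk L z s)).length, Nat.lt_succ_of_le (hk _ _)⟩,
   ⟨(b (gG b u L z s) (u s)).length, Nat.lt_succ_of_le (hk _ _)⟩)

theorem gCode_inj (hL : 1 ≤ L) (k : ℕ) (hk : ∀ w w', (b w w').length ≤ k) (J n : ℕ)
    (z' : ℕ → α) (hz : (gW b u L z J).length ≤ n) (hz' : (gW b u L z' J).length ≤ n)
    (hF : (List.ofFn fun i : Fin n => gF b u L z i) = List.ofFn fun i : Fin n => gF b u L z' i)
    (hc : gCode b u L z k hk J = gCode b u L z' k hk J) :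
    ∀ i < J * L, z i = z' i := by
  have hpre : ∀ w w' : List α, w <+: gW b u L z J → w' <+: gW b u L z' J →
      w.length = w'.length → w = w' := by
    intro w w' h1 h2 h3
    have h4 := prefix_ofFn_gF b u L z hL h1 (h1.length_le.trans hz)
    have h5 := prefix_ofFn_gF b u L z' hL h2 (h2.length_le.trans hz')
    rw [← hF] at h5
    exact (List.prefix_of_prefix_length_le h4 h5 h3.le).eq_of_length h3
  have hlen : ∀ s ≤ J, (gW b u L z s).length = (gW b u L z' s).length := by
    intro s hs
    induction s with
    | zero => rfl
    | succ s ih =>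
      have h1 := congrFun hc ⟨s, hs⟩
      simp only [gCode, Prod.mk.injEq, Fin.mk.injEq] at h1
      rw [gW_length_succ, gW_length_succ, ih (by omega), h1.1, h1.2]
  have hblk : ∀ s < J, gBlk L z s = gBlk L z' s := by
    intro s hs
    have h1 := congrFun hc ⟨s, hs⟩
    simp only [gCode, Prod.mk.injEq, Fin.mk.injEq] at h1
    have h2 : gG b u L z s = gG b u L z' s := by
      apply hpre
      · exact (gG_prefix b u L z s).trans (gW_prefix b u L z hs)
      · exact (gG_prefix b u L z' s).trans (gW_prefix b u L z' hs)
      · rw [gG_length, gG_length, hlen s hs.le, h1.1]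
    have h3 : ∀ z : ℕ → α, gBlk L z s = (gG b u L z s).drop
        ((gW b u L z s).length + (b (gW b u L z s) (gBlk L z s)).length) := by
      intro z
      conv_rhs => rw [gG, glue]
      rw [← List.length_append, List.drop_left]
    rw [h3 z, h3 z', h2, hlen s hs.le, h1.1]
  intro i hi
  have h1 : i / L < J := Nat.div_lt_of_lt_mul (by rwa [mul_comm])
  have h2 := hblk _ h1
  rw [gBlk, gBlk, List.ofFn_inj] at h2
  have h3 := congrFun h2 ⟨i % L, Nat.mod_lt _ hL⟩
  have h4 : i / L * L + i % L = i := by rw [mul_comm]; exact Nat.div_add_mod i L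
  simpa only [h4] using h3

theorem ofFn_add (p q : ℕ) : (List.ofFn fun i : Fin (p + q) => z i) =
    (List.ofFn fun i : Fin p => z i) ++ List.ofFn fun i : Fin q => z (p + i) := by
  rw [List.ofFn_add]
  rfl

theorem ofFn_le_sum
    (ℓ : List α → ℝ)
    (hsub : ∀ w w', ℓ (w ++ w') ≤ ℓ w + ℓ w')
    (h0 : ℓ [] = 0)
    (j : ℕ) : ℓ (List.ofFn fun i : Fin (j * L) => z i) ≤
    ∑ s ∈ Finset.range j, ℓ (gBlk L z s) := by
  induction j with
  | zero => simp [h0]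
  | succ j ih =>
    rw [Finset.sum_range_succ]
    have : (List.ofFn fun i : Fin ((j + 1) * L) => z i) =
      (List.ofFn fun i : Fin (j * L) => z i) ++ gBlk L z j := by
      rw [gBlk, ← ofFn_add, Nat.succ_mul]
    rw [this]
    linarith [hsub (List.ofFn fun i : Fin (j * L) => z i) (gBlk L z j)]

theorem gW_ge
    (ℓ : List α → ℝ)
    (h0 : ℓ [] = 0)
    (K : ℝ)
    (hbK : ∀ w w', ℓ w + ℓ w' - K ≤ ℓ (glue b w w'))
    (j : ℕ) : ∑ s ∈ Finset.range j, ℓ (gBlk L z s) + ∑ s ∈ Finset.range j, ℓ (u s)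
    - 2 * K * j ≤ ℓ (gW b u L z j) := by
  induction j with
  | zero => simp [gW, h0]
  | succ j ih =>
    rw [Finset.sum_range_succ, Finset.sum_range_succ, gW_succ]
    have h1 := hbK (gG b u L z j) (u j)
    have h2 := hbK (gW b u L z j) (gBlk L z j)
    rw [← gG] at h2
    push_cast
    linarith

theorem gW_length_le
    (k : ℕ)
    (hk : ∀ w w', (b w w').length ≤ k)
    (j : ℕ) : ((gW b u L z j).length : ℝ) ≤ (L + 2 * k) * j +
    ∑ s ∈ Finset.range j, ((u s).length : ℝ) := by
  induction j with
  | zero => simp [gW]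
  | succ j ih =>
    rw [Finset.sum_range_succ, gW_length_succ]
    have h1 : ((b (gW b u L z j) (gBlk L z j)).length : ℝ) ≤ k := by exact_mod_cast hk _ _
    have h2 : ((b (gG b u L z j) (u j)).length : ℝ) ≤ k := by exact_mod_cast hk _ _
    push_cast
    linarith

theorem sum_len_le
    (ℓ : List α → ℝ)
    (hu : ∀ J : ℕ, ∑ s ∈ Finset.range (J + 1), (((u s).length : ℝ) + |ℓ (u s)|) ≤ J)
    (J : ℕ) : ∑ s ∈ Finset.range (J + 1), ((u s).length : ℝ) ≤ J :=
  (Finset.sum_le_sum fun s _ => by linarith [abs_nonneg (ℓ (u s))]).trans (hu J)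

theorem neg_le_sum
    (ℓ : List α → ℝ)
    (hu : ∀ J : ℕ, ∑ s ∈ Finset.range (J + 1), (((u s).length : ℝ) + |ℓ (u s)|) ≤ J)
    (J : ℕ) : -(J : ℝ) ≤ ∑ s ∈ Finset.range (J + 1), ℓ (u s) := by
  rw [neg_le, ← Finset.sum_neg_distrib]
  refine (Finset.sum_le_sum fun s _ => ?_).trans (hu J)
  have : (0 : ℝ) ≤ (u s).length := by positivity
  linarith [neg_le_abs (ℓ (u s))]

theorem gW_length_le'
    (ℓ : List α → ℝ)
    (k : ℕ)
    (hk : ∀ w w', (b w w').length ≤ k)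
    (hu : ∀ J : ℕ, ∑ s ∈ Finset.range (J + 1), (((u s).length : ℝ) + |ℓ (u s)|) ≤ J)
    (j : ℕ) : ((gW b u L z (j + 1)).length : ℝ) ≤ (L + 2 * k) * (j + 1) + j := by
  have h1 := gW_length_le b u L z k hk (j + 1)
  have h2 := sum_len_le u ℓ hu j
  push_cast at h1
  linarith

theorem main_estimate
    (ℓ : List α → ℝ)
    (hsub : ∀ w w', ℓ (w ++ w') ≤ ℓ w + ℓ w')
    (h0 : ℓ [] = 0)
    (A : ℝ)
    (hA0 : 0 ≤ A)
    (hA : ∀ w, ℓ w ≤ A * w.length)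
    (K : ℝ)
    (k : ℕ)
    (hk : ∀ w w', (b w w').length ≤ k)
    (hbK : ∀ w w', ℓ w + ℓ w' - K ≤ ℓ (glue b w w'))
    (hu : ∀ J : ℕ, ∑ s ∈ Finset.range (J + 1), (((u s).length : ℝ) + |ℓ (u s)|) ≤ J)
    (hL : 1 ≤ L) (cL : ℝ) (hcL : ∀ w : List α, w.length = L → -cL ≤ ℓ w)
    (n j : ℕ) (h1 : (gW b u L z (j + 1)).length ≤ n) (h2 : n < (gW b u L z (j + 2)).length) :
    ℓ (List.ofFn fun i : Fin (j * L) => z i) ≤ ℓ (List.ofFn fun i : Fin n => gF b u L z i)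
      + (2 * cL + 4 * K + 1 + A * (L + 2 * k + 1)) + j * (2 * K + 1 + A) ∧
    (j * L : ℝ) ≤ n ∧ (n : ℝ) - j * L ≤ (2 * L + 4 * k + 1) + j * (2 * k + 1) := by
  have hj : (j * L : ℝ) ≤ n := by
    have := (le_gW_length b u L z (j + 1)).trans h1
    have h : j * L ≤ n := by nlinarith
    exact_mod_cast h
  have hlen := gW_length_le' b u L z ℓ k hk hu (j + 1)
  have h2' : (n : ℝ) ≤ (gW b u L z (j + 2)).length := by exact_mod_cast h2.le
  have h1' : ((gW b u L z (j + 1)).length : ℝ) ≤ n := by exact_mod_cast h1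
  refine ⟨?_, hj, ?_⟩
  · obtain ⟨r, hr⟩ := ofFn_gF_prefix b u L z hL h2.le
    have e1 := hsub (List.ofFn fun i : Fin n => gF b u L z i) r
    rw [hr] at e1
    have e2 := hA r
    have e3 : (n : ℝ) + r.length = (gW b u L z (j + 2)).length := by
      rw [← hr]; simp
    have e4 : ((gW b u L z (j + 2)).length : ℝ) ≤
        (gW b u L z (j + 1)).length + (L + 2 * k) + (u (j + 1)).length := by
      rw [gW_length_succ b u L z (j + 1)]
      have h1 : ((b (gW b u L z (j + 1)) (gBlk L z (j + 1))).length : ℝ) ≤ k := by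
        exact_mod_cast hk _ _
      have h2 : ((b (gG b u L z (j + 1)) (u (j + 1))).length : ℝ) ≤ k := by exact_mod_cast hk _ _
      push_cast
      linarith
    have e5 : ((u (j + 1)).length : ℝ) ≤ j + 1 := by
      have := sum_len_le u ℓ hu (j + 1)
      rw [Finset.sum_range_succ] at this
      have h3 : 0 ≤ ∑ s ∈ Finset.range (j + 1), ((u s).length : ℝ) := by positivity
      push_cast at this
      linarith
    have e6 : A * r.length ≤ A * (L + 2 * k + (j + 1)) :=
      mul_le_mul_of_nonneg_left (by linarith) hA0
    have e7 := gW_ge b u L z ℓ h0 K hbK (j + 2)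
    have e8 := neg_le_sum u ℓ hu (j + 1)
    have e9 := ofFn_le_sum L z ℓ hsub h0 j
    rw [Finset.sum_range_succ, Finset.sum_range_succ] at e7
    have e10 := hcL _ (gBlk_length L z j)
    have e11 := hcL _ (gBlk_length L z (j + 1))
    push_cast at e7 e8
    linarith
  · push_cast at hlen
    have : (j + 1 + 1 : ℝ) = j + 2 := by ring
    rw [this] at hlen
    linarith

theorem exists_stage
    (ℓ : List α → ℝ)
    (k : ℕ)
    (hk : ∀ w w', (b w w').length ≤ k)
    (hu : ∀ J : ℕ, ∑ s ∈ Finset.range (J + 1), (((u s).length : ℝ) + |ℓ (u s)|) ≤ J)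
    (hL : 1 ≤ L) (N n : ℕ) (hn : (N + 1) * (L + 2 * k + 1) ≤ n) :
    ∃ j, N ≤ j * L ∧ (gW b u L z (j + 1)).length ≤ n ∧ n < (gW b u L z (j + 2)).length := by
  have hex : ∃ i, n < (gW b u L z i).length := by
    refine ⟨n + 1, ?_⟩
    have := le_gW_length b u L z (n + 1)
    nlinarith
  have hN : (gW b u L z (N + 1)).length ≤ n := by
    refine le_trans ?_ hn
    have := gW_length_le' b u L z ℓ k hk hu N
    have h : ((gW b u L z (N + 1)).length : ℝ) ≤ ((N + 1) * (L + 2 * k + 1) : ℕ) := by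
      push_cast
      nlinarith
    exact_mod_cast h
  have h1 : N + 1 < Nat.find hex := by
    by_contra h
    have h2 := (gW_prefix b u L z (not_lt.1 h)).length_le
    have h3 := Nat.find_spec hex
    omega
  obtain ⟨j, hj⟩ : ∃ j, Nat.find hex = j + 2 := ⟨Nat.find hex - 2, by omega⟩
  refine ⟨j, ?_, not_lt.1 (Nat.find_min hex (by omega)), hj ▸ Nat.find_spec hex⟩
  have : N ≤ j := by omega
  nlinarith

theorem gF_irregular
    (ℓ : List α → ℝ)
    (hsub : ∀ w w', ℓ (w ++ w') ≤ ℓ w + ℓ w')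
    (A : ℝ)
    (hA0 : 0 ≤ A)
    (hA : ∀ w, ℓ w ≤ A * w.length)
    (K : ℝ)
    (hK0 : 0 ≤ K)
    (k : ℕ)
    (hk : ∀ w w', (b w w').length ≤ k)
    (hbK : ∀ w w', ℓ w + ℓ w' - K ≤ ℓ (glue b w w'))
    (hu : ∀ J : ℕ, ∑ s ∈ Finset.range (J + 1), (((u s).length : ℝ) + |ℓ (u s)|) ≤ J)
    (hL : 1 ≤ L)
    (hu2 : ¬ ∃ c : ℝ, ∀ η > 0, ∀ᶠ s : ℕ in atTop, |ℓ (u s) - c * (u s).length| ≤ η * s) :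
    ¬ ∃ c : ℝ, Tendsto (fun n : ℕ => ℓ (List.ofFn fun i : Fin n => gF b u L z i) / n)
      atTop (nhds c) := by
  rintro ⟨c, hc⟩
  refine hu2 ⟨c, fun η hη => ?_⟩
  set R : ℝ := K + A * k + |c| * k with hR
  have hR0 : 0 ≤ R := by positivity
  set Q : ℝ := 2 * ((L + 2 * k) + 1) with hQ
  have hQ0 : 0 < Q := by positivity
  set θ : ℝ := η / (4 * Q) with hθ
  have hθ0 : 0 < θ := by positivity
  have hθQ : θ * Q = η / 4 := by rw [hθ]; field_simp
  rw [Metric.tendsto_atTop] at hc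
  obtain ⟨n0, hn0⟩ := hc θ hθ0
  have hn1 : ∀ w : List α, ∀ J, w <+: gW b u L z J → n0 ≤ w.length → 1 ≤ w.length →
      |ℓ w - c * w.length| ≤ θ * w.length := by
    intro w J hw h1 h2
    have h3 := hn0 _ h1
    rw [ofFn_gF_length b u L z hL hw, Real.dist_eq] at h3
    have h4 : (0 : ℝ) < w.length := by exact_mod_cast h2
    have h5 : ℓ w - c * w.length = (ℓ w / w.length - c) * w.length := by field_simp
    rw [h5, abs_mul, abs_of_pos h4]
    exact mul_le_mul_of_nonneg_right h3.le h4.le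
  obtain ⟨s1, hs1⟩ := exists_nat_ge (2 * R / η)
  filter_upwards [eventually_ge_atTop (n0 + 1), eventually_ge_atTop s1] with s hs hs2
  have g1 : (s + 1) * L ≤ (gG b u L z s).length := by
    have := le_gW_length b u L z s
    rw [gG_length, Nat.succ_mul]
    omega
  have g2 : s + 1 ≤ (gG b u L z s).length := by nlinarith
  have g3 := (gG_prefix b u L z s).length_le
  have a1 := hn1 _ _ (gG_prefix b u L z s) (by omega) (by omega)
  have a2 := hn1 _ _ (List.prefix_refl (gW b u L z (s + 1))) (by omega) (by omega)
  have a3 := hbK (gG b u L z s) (u s)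
  have a4 : ℓ (glue b (gG b u L z s) (u s)) ≤ ℓ (gG b u L z s) + A * k + ℓ (u s) := by
    have q1 := hsub (gG b u L z s ++ b (gG b u L z s) (u s)) (u s)
    have q2 := hsub (gG b u L z s) (b (gG b u L z s) (u s))
    have q3 := hA (b (gG b u L z s) (u s))
    have q4 : A * (b (gG b u L z s) (u s)).length ≤ A * k :=
      mul_le_mul_of_nonneg_left (by exact_mod_cast hk _ _) hA0
    rw [glue]
    linarith
  rw [← gW_succ] at a3 a4
  have a5 : ((gW b u L z (s + 1)).length : ℝ) = (gG b u L z s).length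
      + (b (gG b u L z s) (u s)).length + (u s).length := by
    rw [gW_succ, glue]; simp; ring
  have a6 : |c * ((b (gG b u L z s) (u s)).length : ℝ)| ≤ |c| * k := by
    rw [abs_mul, Nat.abs_cast]
    exact mul_le_mul_of_nonneg_left (by exact_mod_cast hk _ _) (abs_nonneg _)
  have a7 := gW_length_le' b u L z ℓ k hk hu s
  have hs3 : (1 : ℝ) ≤ s := by
    have : 1 ≤ s := by omega
    exact_mod_cast this
  have a8 : ((gW b u L z (s + 1)).length : ℝ) ≤ Q * s := by
    rw [hQ]
    have : (0 : ℝ) ≤ L + 2 * k := by positivity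
    nlinarith
  have a9 : ((gG b u L z s).length : ℝ) ≤ Q * s := le_trans (by exact_mod_cast g3) a8
  have b1 : θ * (gW b u L z (s + 1)).length ≤ η / 4 * s := by
    rw [← hθQ, mul_assoc]; exact mul_le_mul_of_nonneg_left a8 hθ0.le
  have b2 : θ * (gG b u L z s).length ≤ η / 4 * s := by
    rw [← hθQ, mul_assoc]; exact mul_le_mul_of_nonneg_left a9 hθ0.le
  have b3 : R ≤ η / 2 * s := by
    have : (s1 : ℝ) ≤ s := by exact_mod_cast hs2
    have := hs1.trans this
    rw [div_le_iff₀ hη] at this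
    linarith
  have b4 : c * ((gW b u L z (s + 1)).length : ℝ) = c * (gG b u L z s).length
      + c * (b (gG b u L z s) (u s)).length + c * (u s).length := by
    rw [a5]; ring
  have hAk : 0 ≤ A * k := by positivity
  rw [abs_le] at a1 a2 a6 ⊢
  constructor <;> linarith [a1.1, a1.2, a2.1, a2.2, a6.1, a6.2]

end Words

section Cover

theorem finite_image_phi {m : ℕ} (ℓ : List (Fin m) → ℝ) (t : ℝ) (n : ℕ) (S : Set (ℕ → Fin m)) :
    ((fun x : ℕ → Fin m => t * ℓ (List.ofFn fun i : Fin n => x i)) '' S).Finite := by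
  refine (Set.finite_range fun g : Fin n → Fin m => t * ℓ (List.ofFn g)).subset ?_
  rintro _ ⟨x, _, rfl⟩
  exact ⟨fun i => x i, rfl⟩

theorem mcal_transfer {m : ℕ} [MetricSpace (ℕ → Fin m)] (f : (ℕ → Fin m) → (ℕ → Fin m)) (ε : ℝ) (q0 : ℕ)
    (hb1 : ∀ n x y, y ∈ dynBall f n x ε → ∀ i < n, x i = y i)
    (hb2 : ∀ n x y, (∀ i < n + q0, x i = y i) → y ∈ dynBall f n x ε)
    (b : List (Fin m) → List (Fin m) → List (Fin m)) (u : ℕ → List (Fin m))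
    (ℓ : List (Fin m) → ℝ) (hsub : ∀ w w', ℓ (w ++ w') ≤ ℓ w + ℓ w') (h0 : ℓ [] = 0)
    (A : ℝ) (hA0 : 0 ≤ A) (hA : ∀ w, ℓ w ≤ A * w.length)
    (K : ℝ) (k : ℕ) (hk : ∀ w w', (b w w').length ≤ k)
    (hbK : ∀ w w', ℓ w + ℓ w' - K ≤ ℓ (glue b w w'))
    (hu : ∀ J : ℕ, ∑ s ∈ Finset.range (J + 1), (((u s).length : ℝ) + |ℓ (u s)|) ≤ J)
    (Z : Set (ℕ → Fin m)) (hZ : ∀ L, 1 ≤ L → ∀ z, gF b u L z ∈ Z)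
    (t : ℝ) (ht : 0 ≤ t) (a η : ℝ) (hη : 0 < η)
    (hm : mcal f (fun n x => t * ℓ (List.ofFn fun i : Fin n => x i)) Z a ε = 0) :
    mcal f (fun n x => t * ℓ (List.ofFn fun i : Fin n => x i)) Set.univ (a + η) ε = 0 := by
  set Φ : ℕ → (ℕ → Fin m) → ℝ := fun n x => t * ℓ (List.ofFn fun i : Fin n => x i) with hΦ
  set K5 : ℝ := |a| * (2 * k + 1) + t * (2 * K + 1 + A) with hK5
  set q : ℝ := (((k + 1) * (k + 1) : ℕ) : ℝ) with hq
  have hq0 : 0 < q := by rw [hq]; positivity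
  obtain ⟨L, hLq, hL1, hL⟩ : ∃ L : ℕ, q0 ≤ L ∧ 1 ≤ L ∧ q * Real.exp (K5 - η * L) < 1 := by
    obtain ⟨L0, hL0⟩ := exists_nat_gt ((K5 + Real.log q) / η)
    refine ⟨max L0 (max q0 1), by simp, by simp, ?_⟩
    have h1 : (L0 : ℝ) ≤ (max L0 (max q0 1) : ℕ) := by exact_mod_cast le_max_left _ _
    have h2 := hL0.trans_le h1
    rw [div_lt_iff₀ hη] at h2
    nth_rewrite 1 [← Real.exp_log hq0]
    rw [← Real.exp_add, Real.exp_lt_one_iff]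
    linarith
  obtain ⟨cL, hcL⟩ : ∃ cL : ℝ, ∀ w : List (Fin m), w.length = L → -cL ≤ ℓ w := by
    obtain ⟨c, hc⟩ := ((List.finite_length_eq (Fin m) L).image ℓ).bddBelow
    exact ⟨-c, fun w hw => by rw [neg_neg]; exact hc ⟨w, hw, rfl⟩⟩
  set Kc : ℝ := |a| * (2 * L + 4 * k + 1) + t * (2 * cL + 4 * K + 1 + A * (L + 2 * k + 1)) with hKc
  let wt : ℝ → (ℕ → Fin m) × ℕ → ℝ≥0∞ := fun a p =>
    ENNReal.ofReal (Real.exp (-a * (p.2 : ℝ) + sSup (Φ p.2 '' dynBall f p.2 p.1 ε)))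
  let bj : ℕ → ℝ := fun j => Real.exp (Kc + j * (K5 - η * L))
  let B : ℝ≥0∞ := ∑' j : ℕ, ENNReal.ofReal (q ^ (j + 1) * bj j)
  have hB : B ≠ ⊤ := by
    apply Summable.tsum_ofReal_ne_top
    have h1 : Summable fun j : ℕ => (q * Real.exp Kc) * (q * Real.exp (K5 - η * L)) ^ j :=
      (summable_geometric_of_lt_one (by positivity) hL).mul_left _
    refine h1.congr fun j => ?_
    simp only [bj]
    rw [Real.exp_add Kc, Real.exp_nat_mul, mul_pow]
    ring
  have hwt : ∀ (z : ℕ → Fin m) (p : (ℕ → Fin m) × ℕ) (j : ℕ),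
      (gW b u L z (j + 1)).length ≤ p.2 → p.2 < (gW b u L z (j + 2)).length →
      gF b u L z ∈ dynBall f p.2 p.1 ε → wt (a + η) (z, j * L) ≤ wt a p * ENNReal.ofReal (bj j) := by
    intro z p j h1 h2 h3
    obtain ⟨e1, e2, e3⟩ := main_estimate b u L z ℓ hsub h0 A hA0 hA K k hk hbK hu hL1 cL hcL
      p.2 j h1 h2
    simp only [wt, bj]
    rw [← ENNReal.ofReal_mul (Real.exp_pos _).le, ← Real.exp_add]
    apply ENNReal.ofReal_le_ofReal
    apply Real.exp_le_exp.2
    have s1 : sSup (Φ (j * L) '' dynBall f (j * L) z ε) ≤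
        t * ℓ (List.ofFn fun i : Fin (j * L) => z i) := by
      apply csSup_le
      · exact ⟨_, z, hb2 _ _ _ (fun _ _ => rfl), rfl⟩
      · rintro _ ⟨y, hy, rfl⟩
        have : (fun i : Fin (j * L) => y i) = fun i : Fin (j * L) => z i :=
          funext fun i => (hb1 _ _ _ hy i i.2).symm
        simp only [hΦ, this, le_refl]
    have s2 : t * ℓ (List.ofFn fun i : Fin p.2 => gF b u L z i) ≤
        sSup (Φ p.2 '' dynBall f p.2 p.1 ε) :=
      le_csSup (finite_image_phi ℓ t _ _).bddAbove ⟨_, h3, rfl⟩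
    have s3 := mul_le_mul_of_nonneg_left e1 ht
    have s4 : -a * (j * L : ℝ) ≤ -a * p.2 + |a| * ((2 * L + 4 * k + 1) + j * (2 * k + 1)) := by
      have r1 : a * ((p.2 : ℝ) - j * L) ≤ |a| * ((p.2 : ℝ) - j * L) :=
        mul_le_mul_of_nonneg_right (le_abs_self a) (by linarith)
      have r2 := mul_le_mul_of_nonneg_left e3 (abs_nonneg a)
      linarith
    push_cast
    rw [hKc, hK5]
    linarith
  have key : ∀ (N : ℕ) (Γ : Set ((ℕ → Fin m) × ℕ)), Γ.Countable →
      (∀ p ∈ Γ, (N + 1) * (L + 2 * k + 1) ≤ p.2) → (Z ⊆ ⋃ p ∈ Γ, dynBall f p.2 p.1 ε) →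
      Mcal f Φ Set.univ (a + η) ε N ≤ coverSum f Φ a ε Γ * B := by
    intro N Γ hΓ hN hcov
    let Good : Γ → ∀ j : ℕ, (Fin (j + 1) → Fin (k + 1) × Fin (k + 1)) → (ℕ → Fin m) → Prop :=
      fun p j c z => (gW b u L z (j + 1)).length ≤ p.1.2 ∧ p.1.2 < (gW b u L z (j + 2)).length ∧
        gF b u L z ∈ dynBall f p.1.2 p.1.1 ε ∧ gCode b u L z k hk (j + 1) = c ∧ N ≤ j * L
    let S : Γ → ∀ j : ℕ, (Fin (j + 1) → Fin (k + 1) × Fin (k + 1)) → Set ((ℕ → Fin m) × ℕ) :=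
      fun p j c => {r | ∃ h : ∃ z, Good p j c z, r = (h.choose, j * L)}
    have hS : ∀ p j c, (S p j c).Subsingleton := by
      rintro p j c r ⟨h, rfl⟩ r' ⟨h', rfl⟩
      rfl
    have hSw : ∀ p j c, ∑' r : S p j c, wt (a + η) r ≤ wt a p * ENNReal.ofReal (bj j) := by
      intro p j c
      by_cases h : ∃ z, Good p j c z
      · have : S p j c = {(h.choose, j * L)} := by
          ext r
          constructor
          · rintro ⟨_, rfl⟩; rfl
          · rintro rfl; exact ⟨h, rfl⟩
        rw [this, tsum_singleton]
        have hg := h.choose_spec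
        exact hwt _ _ _ hg.1 hg.2.1 hg.2.2.1
      · have : S p j c = ∅ := by
          ext r
          constructor
          · rintro ⟨h', _⟩; exact absurd h' h
          · rintro ⟨⟩
        rw [this]
        simp
    let Γ' : Set ((ℕ → Fin m) × ℕ) := ⋃ p : Γ, ⋃ j : ℕ, ⋃ c, S p j c
    have hcount : Γ'.Countable := by
      have : Countable Γ := hΓ.to_subtype
      exact Set.countable_iUnion fun p => Set.countable_iUnion fun j =>
        Set.countable_iUnion fun c => (hS p j c).countable
    have hΓN : ∀ p ∈ Γ', N ≤ p.2 := by
      intro r hr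
      simp only [Γ', Set.mem_iUnion] at hr
      obtain ⟨p, j, c, h, rfl⟩ := hr
      exact h.choose_spec.2.2.2.2
    have hΓc : Set.univ ⊆ ⋃ p ∈ Γ', dynBall f p.2 p.1 ε := by
      intro z _
      have h1 := hcov (hZ L hL1 z)
      simp only [Set.mem_iUnion] at h1
      obtain ⟨p, hp, hzp⟩ := h1
      obtain ⟨j, j1, j2, j3⟩ := exists_stage b u L z ℓ k hk hu hL1 N p.2 (hN p hp)
      have hex : ∃ z', Good ⟨p, hp⟩ j (gCode b u L z k hk (j + 1)) z' :=
        ⟨z, j2, j3, hzp, rfl, j1⟩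
      simp only [Set.mem_iUnion]
      refine ⟨(hex.choose, j * L), ?_, ?_⟩
      · simp only [Γ', Set.mem_iUnion]
        exact ⟨⟨p, hp⟩, j, _, hex, rfl⟩
      · obtain ⟨g1, g2, g3, g4, g5⟩ := hex.choose_spec
        apply hb2
        intro i hi
        refine gCode_inj b u L _ hL1 k hk (j + 1) p.2 z g1 j2 ?_ g4 i ?_
        · rw [List.ofFn_inj]
          funext i
          rw [← hb1 _ _ _ g3 i i.2, ← hb1 _ _ _ hzp i i.2]
        · rw [Nat.succ_mul]
          simp only at hi
          omega
    calc Mcal f Φ Set.univ (a + η) ε N ≤ coverSum f Φ (a + η) ε Γ' :=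
          iInf_le_of_le Γ' (iInf_le_of_le hcount (iInf_le_of_le hΓN (iInf_le _ hΓc)))
      _ = ∑' r : Γ', wt (a + η) r := rfl
      _ ≤ ∑' p : Γ, ∑' r : (⋃ j : ℕ, ⋃ c, S p j c : Set _), wt (a + η) r :=
          ENNReal.tsum_iUnion_le_tsum _ _
      _ ≤ ∑' p : Γ, ∑' j : ℕ, ∑' r : (⋃ c, S p j c : Set _), wt (a + η) r :=
          ENNReal.tsum_le_tsum fun p => ENNReal.tsum_iUnion_le_tsum _ _
      _ ≤ ∑' p : Γ, ∑' j : ℕ, ∑' c, ∑' r : S p j c, wt (a + η) r :=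
          ENNReal.tsum_le_tsum fun p => ENNReal.tsum_le_tsum fun j =>
            ENNReal.tsum_iUnion_le_tsum _ _
      _ ≤ ∑' p : Γ, ∑' j : ℕ, ∑' _c : Fin (j + 1) → Fin (k + 1) × Fin (k + 1),
            wt a p * ENNReal.ofReal (bj j) :=
          ENNReal.tsum_le_tsum fun p => ENNReal.tsum_le_tsum fun j =>
            ENNReal.tsum_le_tsum fun c => hSw p j c
      _ = ∑' p : Γ, ∑' j : ℕ, wt a p * ENNReal.ofReal (q ^ (j + 1) * bj j) := by
          refine tsum_congr fun p => tsum_congr fun j => ?_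
          rw [tsum_fintype, Finset.sum_const, Finset.card_univ, Fintype.card_fun,
            Fintype.card_prod, Fintype.card_fin, Fintype.card_fin, nsmul_eq_mul,
            ENNReal.ofReal_mul (by positivity), hq, ← Nat.cast_pow, ENNReal.ofReal_natCast]
          ring
      _ = coverSum f Φ a ε Γ * B := by
          simp only [ENNReal.tsum_mul_left, ENNReal.tsum_mul_right]
          rfl
  rw [mcal, ENNReal.iSup_eq_zero] at hm ⊢
  intro N
  have h1 := hm ((N + 1) * (L + 2 * k + 1))
  rw [← nonpos_iff_eq_zero]
  have h2 : Mcal f Φ Set.univ (a + η) ε N / B ≤ Mcal f Φ Z a ε ((N + 1) * (L + 2 * k + 1)) :=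
    le_iInf fun Γ => le_iInf fun h1 => le_iInf fun h2 => le_iInf fun h3 =>
      ENNReal.div_le_of_le_mul (key N Γ h1 h2 h3)
  rw [h1, nonpos_iff_eq_zero, ENNReal.div_eq_zero_iff] at h2
  rcases h2 with h2 | h2
  · exact h2.le
  · exact absurd h2 hB

end Cover

section Balls

variable {m : ℕ} [MetricSpace (ℕ → Fin m)]

theorem shift_iterate {m : ℕ} (j : ℕ) (x : ℕ → Fin m) :
    (fun (x : ℕ → Fin m) j => x (j + 1))^[j] x = fun i => x (i + j) := by
  induction j generalizing x with
  | zero => rfl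
  | succ j ih =>
    rw [Function.iterate_succ_apply, ih]
    funext i
    rw [show i + (j + 1) = i + j + 1 by ring]

theorem ball_one
    (hdist : ∀ x y : ℕ → Fin m, x ≠ y →
      dist x y = (2 : ℝ) ^ (-((1 + sInf {j : ℕ | x j ≠ y j} : ℕ) : ℤ))) (ε : ℝ) (hε : ε ≤ 1 / 2) (n : ℕ) (x y : ℕ → Fin m)
    (h : y ∈ dynBall (fun (x : ℕ → Fin m) j => x (j + 1)) n x ε) : ∀ i < n, x i = y i := by
  intro i hi
  have h1 := h i hi
  rw [shift_iterate, shift_iterate] at h1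
  by_contra hne
  have hne2 : (fun j => x (j + i)) ≠ fun j => y (j + i) := fun h => by
    have := congrFun h 0
    simp only [zero_add] at this
    exact hne this
  rw [hdist _ _ hne2] at h1
  have h0 : sInf {j : ℕ | x (j + i) ≠ y (j + i)} = 0 := by
    apply Nat.sInf_eq_zero.2
    left
    simpa using hne
  simp only [h0] at h1
  norm_num at h1
  linarith

theorem ball_two
    (hdist : ∀ x y : ℕ → Fin m, x ≠ y →
      dist x y = (2 : ℝ) ^ (-((1 + sInf {j : ℕ | x j ≠ y j} : ℕ) : ℤ))) (ε : ℝ) (hε : 0 < ε) : ∃ q0 : ℕ, ∀ (n : ℕ) (x y : ℕ → Fin m),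
    (∀ i < n + q0, x i = y i) → y ∈ dynBall (fun (x : ℕ → Fin m) j => x (j + 1)) n x ε := by
  obtain ⟨q0, hq0⟩ := exists_pow_lt_of_lt_one hε (show (1 / 2 : ℝ) < 1 by norm_num)
  refine ⟨q0, fun n x y h j hj => ?_⟩
  rw [shift_iterate, shift_iterate]
  by_cases hne : (fun i => x (i + j)) = fun i => y (i + j)
  · rw [hne, dist_self]; exact hε
  · rw [hdist _ _ hne]
    have hs : q0 ≤ sInf {i : ℕ | x (i + j) ≠ y (i + j)} := by
      obtain ⟨i, hi⟩ := Function.ne_iff.1 hne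
      refine le_csInf ⟨i, hi⟩ fun i hi => ?_
      by_contra hlt
      exact hi (h _ (by omega))
    refine lt_of_le_of_lt ?_ hq0
    rw [zpow_neg, zpow_natCast, ← inv_pow, one_div]
    exact pow_le_pow_of_le_one (by norm_num) (by norm_num) (by omega)

end Balls

theorem mcal_mono_set {X : Type*} [MetricSpace X] (f : X → X) (Φ : ℕ → X → ℝ) (Z : Set X)
    (a ε : ℝ) : mcal f Φ Z a ε ≤ mcal f Φ Set.univ a ε := by
  refine iSup_mono fun N => ?_
  refine iInf_mono fun Γ => iInf_mono fun _ => iInf_mono fun _ => ?_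
  exact le_iInf fun h => iInf_le_of_le ((Set.subset_univ Z).trans h) le_rfl

/-- For the shift on `{1, …, m}^ℕ` with the metric
`d(x,y) = 2^{-min{j ≥ 1 : x_j ≠ y_j}}` and a quasi-multiplicative family of nonzero
matrix products, if the irregular set of `Φ¹` is nonempty then for every `t ≥ 0` the
common irregular set `⋂_{s>0} I(Φˢ, σ)` carries full pressure for `Φᵗ`, where
`φᵗ_n(x) = t·log‖M_{x_1}⋯M_{x_n}‖`. -/
theorem shift_matrix_cocycle_irregular_full_pressure
    (m d : ℕ) (hm : 2 ≤ m) [MetricSpace (ℕ → Fin m)]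
    (hdist : ∀ x y : ℕ → Fin m, x ≠ y →
      dist x y = (2 : ℝ) ^ (-((1 + sInf {j : ℕ | x j ≠ y j} : ℕ) : ℤ)))
    (Mat : Fin m → ((Fin d → ℂ) →L[ℂ] (Fin d → ℂ)))
    (hnz : ∀ w : List (Fin m), w ≠ [] → (w.map Mat).prod ≠ 0)
    (C : ℝ) (hC : 0 < C) (k : ℕ)
    (hquasi : ∀ w w' : List (Fin m), ∃ wb : List (Fin m), wb.length ≤ k ∧
      C * ‖(w.map Mat).prod‖ * ‖(w'.map Mat).prod‖ ≤ ‖((w ++ wb ++ w').map Mat).prod‖)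
    (hirr : (irregularSet (fun n (x : ℕ → Fin m) =>
      (1 : ℝ) * Real.log ‖(List.ofFn fun i : Fin n => Mat (x i)).prod‖)).Nonempty)
    (t : ℝ) (ht : 0 ≤ t) :
    aaPressure (fun (x : ℕ → Fin m) j => x (j + 1))
        (fun n x => t * Real.log ‖(List.ofFn fun i : Fin n => Mat (x i)).prod‖)
        (⋂ s ∈ Set.Ioi (0 : ℝ), irregularSet (fun n (x : ℕ → Fin m) =>
          s * Real.log ‖(List.ofFn fun i : Fin n => Mat (x i)).prod‖)) =
      aaPressure (fun (x : ℕ → Fin m) j => x (j + 1))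
        (fun n x => t * Real.log ‖(List.ofFn fun i : Fin n => Mat (x i)).prod‖)
        Set.univ := by
  classical
  obtain ⟨ℓ, hℓ⟩ : ∃ ℓ : List (Fin m) → ℝ, ∀ w, ℓ w = Real.log ‖(w.map Mat).prod‖ :=
    ⟨_, fun _ => rfl⟩
  have hof : ∀ (n : ℕ) (x : ℕ → Fin m),
      Real.log ‖(List.ofFn fun i : Fin n => Mat (x i)).prod‖ =
        ℓ (List.ofFn fun i : Fin n => x i) := by
    intro n x
    simp only [hℓ, List.map_ofFn]
    rfl
  simp only [hof] at hirr ⊢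
  have hpos : ∀ w : List (Fin m), 0 < ‖(w.map Mat).prod‖ := by
    intro w
    rw [norm_pos_iff]
    by_cases hw : w = []
    · subst hw
      intro h
      refine hnz [⟨0, by omega⟩] (by simp) ?_
      rw [List.map_cons, List.prod_cons, h, mul_zero]
    · exact hnz w hw
  have hsub : ∀ w w', ℓ (w ++ w') ≤ ℓ w + ℓ w' := by
    intro w w'
    simp only [hℓ]
    rw [← Real.log_mul (hpos w).ne' (hpos w').ne']
    apply Real.log_le_log (hpos _)
    rw [List.map_append, List.prod_append]
    exact norm_mul_le _ _
  have h0' : ℓ [] ≤ 0 := by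
    simp only [hℓ]
    apply Real.log_nonpos (norm_nonneg _)
    rw [List.map_nil, List.prod_nil]
    exact ContinuousLinearMap.norm_id_le (𝕜 := ℂ) (E := Fin d → ℂ)
  have h0 : ℓ [] = 0 := by
    have := hsub [] []
    simp only [List.append_nil] at this
    linarith
  set A : ℝ := ∑ i, |ℓ [i]| with hAdef
  have hA0 : 0 ≤ A := Finset.sum_nonneg fun i _ => abs_nonneg _
  have hA : ∀ w : List (Fin m), ℓ w ≤ A * w.length := by
    intro w
    induction w with
    | nil => simp [h0]
    | cons i w ih =>
      have h1 := hsub [i] w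
      have h2 : |ℓ [i]| ≤ A :=
        Finset.single_le_sum (f := fun i => |ℓ [i]|) (fun i _ => abs_nonneg _) (Finset.mem_univ i)
      have h3 := le_abs_self (ℓ [i])
      rw [List.singleton_append] at h1
      rw [List.length_cons]
      push_cast
      linarith
  choose b hb1 hb2 using hquasi
  set K : ℝ := |Real.log C| with hK
  have hK0 : 0 ≤ K := abs_nonneg _
  have hbK : ∀ w w', ℓ w + ℓ w' - K ≤ ℓ (glue b w w') := by
    intro w w'
    have h1 := Real.log_le_log (mul_pos (mul_pos hC (hpos w)) (hpos w')) (hb2 w w')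
    rw [Real.log_mul (mul_pos hC (hpos w)).ne' (hpos w').ne',
      Real.log_mul hC.ne' (hpos w).ne'] at h1
    have h2 := neg_abs_le (Real.log C)
    simp only [hℓ, glue]
    linarith
  obtain ⟨x, hx⟩ := hirr
  simp only [irregularSet, one_mul, Set.mem_setOf_eq] at hx
  obtain ⟨u, hu, hu2⟩ := irregular_words ℓ h0 x hx
  set Z : Set (ℕ → Fin m) := ⋂ s ∈ Set.Ioi (0 : ℝ), irregularSet (fun n (x : ℕ → Fin m) =>
          s * ℓ (List.ofFn fun i : Fin n => x i)) with hZdef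
  have hZ : ∀ L, 1 ≤ L → ∀ z, gF b u L z ∈ Z := by
    intro L hL z
    simp only [hZdef, Set.mem_iInter]
    rintro s hs ⟨c, hc⟩
    have hs0 : s ≠ 0 := (show 0 < s from hs).ne'
    refine gF_irregular b u L z ℓ hsub A hA0 hA K hK0 k hb1 hbK hu hL hu2 ⟨s⁻¹ * c, ?_⟩
    refine (hc.const_mul s⁻¹).congr fun n => ?_
    rw [mul_div_assoc, inv_mul_cancel_left₀ hs0]
  unfold aaPressure
  apply Filter.limsup_congr
  have hmem : Set.Ioc (0 : ℝ) (1 / 2) ∈ nhdsWithin (0 : ℝ) (Set.Ioi 0) :=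
    Ioc_mem_nhdsGT (by norm_num)
  filter_upwards [hmem] with ε hε
  apply le_antisymm
  · apply sInf_le_sInf
    apply Set.image_mono
    intro a ha
    exact nonpos_iff_eq_zero.1 ((mcal_mono_set _ _ Z a ε).trans_eq ha)
  · apply le_sInf
    rintro _ ⟨a, ha, rfl⟩
    obtain ⟨q0, hq0⟩ := ball_two hdist ε hε.1
    apply EReal.le_of_forall_lt_iff_le.1
    intro r hr
    have hr2 : a < r := EReal.coe_lt_coe_iff.1 hr
    apply sInf_le
    refine ⟨r, ?_, rfl⟩
    have := mcal_transfer (fun (x : ℕ → Fin m) j => x (j + 1)) ε q0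
      (ball_one hdist ε hε.2) hq0 b u ℓ hsub h0 A hA0 hA K k hb1 hbK hu Z hZ t ht a (r - a)
      (by linarith) ha
    rwa [add_sub_cancel] at this
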